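/- When the meta-algorithm is run with Commit procedure CommitUnknown and the feedback is corrupted in at most C rounds, the total regret on leaves lying strictly above the correct leaf satisfies Σ_{ℓ∈L⁺} R(ℓ) ≤ 2 N_F + 2C, where L⁺ is the set of leaf intervals whose left endpoint exceeds v*. -/

import Mathlib

/-!
On a leaf `[L, R)` with `v < L` every posted price exceeds `v`, so each round there costs exactly
`v ≤ 1` and the truthful feedback is always `0`; it suffices to count these rounds.  Such a round
either makes Commit return FAIL, or is corrupted, or is the truthful `0` received when `R` is
posted in the second round of a block.  In the last case the first round of the same block got
feedback `1` at `L`, hence was corrupted (`upper_round_cases`).  The rounds on upper leaves are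
therefore covered by the failing rounds, the corrupted rounds, and the successors of corrupted
rounds, which gives the bound `N_F + 2C`.
-/


namespace RobustPricing

/-- Phase of the current search step.  At a non-leaf node: first endpoint query, second
endpoint query, or midpoint query.  At a leaf: `checkL` is the first round of a
`CommitUnknown` block (posting `L`) and `checkR` is its second round. -/
inductive Ph | checkL | checkR | mid
deriving DecidableEq

/-- Parent of a node `(d, k)` (representing the dyadic interval `[k/2^d, (k+1)/2^d)`). -/
def parent (p : ℕ × ℕ) : ℕ × ℕ := (p.1 - 1, p.2 / 2)

/-- Left child of a dyadic node. -/
def leftChild (p : ℕ × ℕ) : ℕ × ℕ := (p.1 + 1, 2 * p.2)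

/-- Right child of a dyadic node. -/
def rightChild (p : ℕ × ℕ) : ℕ × ℕ := (p.1 + 1, 2 * p.2 + 1)

/-- Left endpoint `L` of the dyadic interval of a node. -/
noncomputable def nodeL (p : ℕ × ℕ) : ℝ := (p.2 : ℝ) / 2 ^ p.1

/-- Right endpoint `R` of the dyadic interval of a node. -/
noncomputable def nodeR (p : ℕ × ℕ) : ℝ := ((p.2 : ℝ) + 1) / 2 ^ p.1

/-- Midpoint `M = (L+R)/2` of the dyadic interval of a node. -/
noncomputable def nodeM (p : ℕ × ℕ) : ℝ := (2 * (p.2 : ℝ) + 1) / 2 ^ (p.1 + 1)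

/-- The leaf `ℓ* = (D, ⌊v·2^D⌋)` at depth `D` containing the valuation `v`. -/
noncomputable def lstar (v : ℝ) (D : ℕ) : ℕ × ℕ := (D, ⌊v * 2 ^ D⌋₊)

/-- Exploration probability of `CommitUnknown`: `q_s = min{4 ln(T/δ)/s, 1}`. -/
noncomputable def qProb (T : ℕ) (δ : ℝ) (s : ℕ) : ℝ :=
  min (4 * Real.log ((T : ℝ) / δ) / (s : ℕ)) 1

/-- State of the meta-algorithm (Algorithm 1) instantiated with the `CommitUnknown`
procedure: current node `nd`, phase `ph` within the current search step, a stored bit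
`flag` (at a non-leaf node, the feedback observed at the left endpoint in the current
safety check; at a leaf, whether the second round of the current block posts the right
endpoint `R`), and the global never-reset per-leaf counters `ctr` (the `s_ℓ`). -/
structure StU where
  nd : ℕ × ℕ
  ph : Ph
  flag : Bool
  ctr : ℕ → ℕ

/-- Price posted by the meta-algorithm with `CommitUnknown` (leaves at depth `D`).  At a
leaf `ℓ = [L,R)`: the first round of a block posts `L`, and the second round posts `R` if
the Bernoulli draw succeeded and `L` otherwise.  At a non-leaf node the safety check posts
`L` then `R`, followed by the midpoint `M`. -/
noncomputable def priceU (D : ℕ) (s : StU) : ℝ :=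
  if s.nd.1 = D then
    if s.ph = Ph.checkR ∧ s.flag = true then nodeR s.nd else nodeL s.nd
  else
    match s.ph with
    | Ph.checkL => nodeL s.nd
    | Ph.checkR => nodeR s.nd
    | Ph.mid => nodeM s.nd

/-- One-round transition of the meta-algorithm with `CommitUnknown`, given the observed
feedback `b` and the uniform random seed `u ∈ [0,1]` of the current round.  At a leaf
`ℓ = [L,R)` the procedure repeats two-round blocks: it posts `L`, returning FAIL
(backtracking to the parent) if `σ_L = 0`; it increments the never-reset counter `s_ℓ`;
then with probability `q_{s_ℓ} = min{4 ln(T/δ)/s_ℓ, 1}` (i.e. iff `u < q_{s_ℓ}`) it posts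
`R` in the second round (returning FAIL if `σ_R = 1`), and otherwise posts `L` again
(returning FAIL if `σ_L = 0`).  At a non-leaf node: safety check and midpoint query as in
Algorithm 1. -/
noncomputable def stepU (D T : ℕ) (δ : ℝ) (s : StU) (b : Bool) (u : ℝ) : StU :=
  if s.nd.1 = D then
    match s.ph with
    | Ph.checkR =>
      if (s.flag = true ∧ b = true) ∨ (s.flag = false ∧ b = false) then
        ⟨parent s.nd, Ph.checkL, false, s.ctr⟩
      else ⟨s.nd, Ph.checkL, false, s.ctr⟩
    | _ =>
      if b = false then ⟨parent s.nd, Ph.checkL, false, s.ctr⟩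
      else
        ⟨s.nd, Ph.checkR, decide (u < qProb T δ (s.ctr s.nd.2 + 1)),
          Function.update s.ctr s.nd.2 (s.ctr s.nd.2 + 1)⟩
  else
    match s.ph with
    | Ph.checkL => ⟨s.nd, Ph.checkR, b, s.ctr⟩
    | Ph.checkR =>
      if s.flag = false ∨ b = true then ⟨parent s.nd, Ph.checkL, false, s.ctr⟩
      else ⟨s.nd, Ph.mid, s.flag, s.ctr⟩
    | Ph.mid => ⟨(if b then rightChild s.nd else leftChild s.nd), Ph.checkL, false, s.ctr⟩

/-- Run of the meta-algorithm with `CommitUnknown` (leaves at depth `D = ⌈log₂ T⌉`)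
against an adaptive adversary: `adv h` decides, from the history `h` of past
(price, observed feedback) pairs — hence from the seller's price distribution but *not*
from the realized price of the current round — whether to corrupt the current round, and
`cor h p` is the corrupted feedback it then reports (it may depend on the realized price
`p`); on uncorrupted rounds the observed feedback is the truthful `1{p ≤ v}`.  The value
`runU T δ v adv cor u t` is the pair (state at round `t`, history of the first `t`
rounds), where `u` is the sequence of uniform random seeds. -/
noncomputable def runU (T : ℕ) (δ v : ℝ)
    (adv : List (ℝ × Bool) → Bool) (cor : List (ℝ × Bool) → ℝ → Bool)
    (u : ℕ → ℝ) : ℕ → StU × List (ℝ × Bool)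
  | 0 => (⟨(0, 0), Ph.checkL, false, fun _ => 0⟩, [])
  | t + 1 =>
    let sh := runU T δ v adv cor u t
    let p := priceU (Nat.clog 2 T) sh.1
    let b := if adv sh.2 = true then cor sh.2 p else decide (p ≤ v)
    (stepU (Nat.clog 2 T) T δ sh.1 b (u t), sh.2 ++ [(p, b)])

/-- State at round `t`. -/
noncomputable def stateU (T : ℕ) (δ v : ℝ) (adv : List (ℝ × Bool) → Bool)
    (cor : List (ℝ × Bool) → ℝ → Bool) (u : ℕ → ℝ) (t : ℕ) : StU :=
  (runU T δ v adv cor u t).1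

/-- Price posted at round `t`. -/
noncomputable def priceAtU (T : ℕ) (δ v : ℝ) (adv : List (ℝ × Bool) → Bool)
    (cor : List (ℝ × Bool) → ℝ → Bool) (u : ℕ → ℝ) (t : ℕ) : ℝ :=
  priceU (Nat.clog 2 T) (stateU T δ v adv cor u t)

/-- Feedback observed by the seller at round `t`. -/
noncomputable def obsAtU (T : ℕ) (δ v : ℝ) (adv : List (ℝ × Bool) → Bool)
    (cor : List (ℝ × Bool) → ℝ → Bool) (u : ℕ → ℝ) (t : ℕ) : Bool :=
  if adv (runU T δ v adv cor u t).2 = true then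
    cor (runU T δ v adv cor u t).2 (priceAtU T δ v adv cor u t)
  else decide (priceAtU T δ v adv cor u t ≤ v)

/-- Number of corrupted rounds among the first `T` rounds: rounds where the observed
feedback differs from the truthful feedback `1{p_t ≤ v}`. -/
noncomputable def corruptionsU (T : ℕ) (δ v : ℝ) (adv : List (ℝ × Bool) → Bool)
    (cor : List (ℝ × Bool) → ℝ → Bool) (u : ℕ → ℝ) : ℕ :=
  ((Finset.range T).filter fun t =>
      obsAtU T δ v adv cor u t ≠ decide (priceAtU T δ v adv cor u t ≤ v)).card

/-- `N_T`: number of Commit calls returning FAIL (backtracking) on the correct leaf `ℓ*`. -/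
noncomputable def NTU (T : ℕ) (δ v : ℝ) (adv : List (ℝ × Bool) → Bool)
    (cor : List (ℝ × Bool) → ℝ → Bool) (u : ℕ → ℝ) : ℕ :=
  ((Finset.range T).filter fun t =>
      (stateU T δ v adv cor u t).nd = lstar v (Nat.clog 2 T) ∧
        (stateU T δ v adv cor u (t + 1)).nd ≠ lstar v (Nat.clog 2 T)).card

/-- `N_F`: number of Commit calls returning FAIL (backtracking) on incorrect leaves. -/
noncomputable def NFU (T : ℕ) (δ v : ℝ) (adv : List (ℝ × Bool) → Bool)
    (cor : List (ℝ × Bool) → ℝ → Bool) (u : ℕ → ℝ) : ℕ :=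
  ((Finset.range T).filter fun t =>
      (stateU T δ v adv cor u t).nd.1 = Nat.clog 2 T ∧
        (stateU T δ v adv cor u t).nd ≠ lstar v (Nat.clog 2 T) ∧
        (stateU T δ v adv cor u (t + 1)).nd ≠ (stateU T δ v adv cor u t).nd).card

/-- `R(ℓ)`: regret accumulated over the rounds `Q(ℓ)` in which the algorithm runs the
Commit subroutine on the leaf `ℓ`, i.e. `Σ_{t ∈ Q(ℓ)} (v − p_t·1{p_t ≤ v})`. -/
noncomputable def RleafU (T : ℕ) (δ v : ℝ) (adv : List (ℝ × Bool) → Bool)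
    (cor : List (ℝ × Bool) → ℝ → Bool) (u : ℕ → ℝ) (l : ℕ × ℕ) : ℝ :=
  ∑ t ∈ (Finset.range T).filter (fun t => (stateU T δ v adv cor u t).nd = l),
    (v - priceAtU T δ v adv cor u t * (if priceAtU T δ v adv cor u t ≤ v then 1 else 0))

/-- Cumulative regret over the horizon `T`: `R_T = T·v − Σ_{t<T} p_t·1{p_t ≤ v}`. -/
noncomputable def regretU (T : ℕ) (δ v : ℝ) (adv : List (ℝ × Bool) → Bool)
    (cor : List (ℝ × Bool) → ℝ → Bool) (u : ℕ → ℝ) : ℝ :=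
  (T : ℝ) * v - ∑ t ∈ Finset.range T,
    priceAtU T δ v adv cor u t * (if priceAtU T δ v adv cor u t ≤ v then 1 else 0)

lemma stateU_succ (T : ℕ) (δ v : ℝ) (adv : List (ℝ × Bool) → Bool)
    (cor : List (ℝ × Bool) → ℝ → Bool) (u : ℕ → ℝ) (t : ℕ) :
    stateU T δ v adv cor u (t + 1) =
      stepU (Nat.clog 2 T) T δ (stateU T δ v adv cor u t) (obsAtU T δ v adv cor u t) (u t) := rfl

lemma nodeL_lstar_le (v : ℝ) (hv : 0 ≤ v) (D : ℕ) : nodeL (lstar v D) ≤ v := by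
  have hpos : (0 : ℝ) < 2 ^ D := by positivity
  simp only [nodeL, lstar]
  rw [div_le_iff₀ hpos]
  exact Nat.floor_le (by positivity)

lemma lt_priceU_of_lt_nodeL {D : ℕ} {s : StU} {v : ℝ} (hD : s.nd.1 = D)
    (h : v < nodeL s.nd) : v < priceU D s := by
  have hLR : nodeL s.nd ≤ nodeR s.nd := by
    simp only [nodeL, nodeR]
    gcongr
    linarith
  simp only [priceU, hD, if_true]
  split_ifs <;> linarith

lemma parent_ne {p : ℕ × ℕ} (h : p.1 ≠ 0) : parent p ≠ p := by
  intro hp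
  have := congrArg Prod.fst hp
  simp only [parent] at this
  omega

/-- At a leaf of positive depth, a round that observes feedback `0` and does not
backtrack can only be the second round of a block. -/
lemma stepU_stay_false {D T : ℕ} {δ : ℝ} {s : StU} {x : ℝ} (hD : s.nd.1 = D) (h0 : D ≠ 0)
    (h : (stepU D T δ s false x).nd = s.nd) : s.ph = Ph.checkR := by
  have hp : parent s.nd ≠ s.nd := parent_ne (by omega)
  by_contra hne
  apply hp
  cases hph : s.ph <;> simp_all [stepU]

/-- The second round of a block at a leaf is only reached from a round on the same leaf that
observed feedback `1`. -/
lemma stepU_checkR {D T : ℕ} {δ : ℝ} {s : StU} {b : Bool} {x : ℝ}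
    (hD : (stepU D T δ s b x).nd.1 = D) (hph : (stepU D T δ s b x).ph = Ph.checkR) :
    s.nd = (stepU D T δ s b x).nd ∧ b = true := by
  unfold stepU at *
  by_cases h : s.nd.1 = D
  · cases h2 : s.ph <;> cases b <;> simp_all <;> split_ifs at hph
  · cases h2 : s.ph <;> simp_all
    split_ifs at hph

/-- Charging of a round spent on a leaf above `v`: it fails, it is corrupted, or the preceding
round is corrupted. -/
lemma upper_round_cases (T : ℕ) (δ v : ℝ) (adv : List (ℝ × Bool) → Bool)
    (cor : List (ℝ × Bool) → ℝ → Bool) (u : ℕ → ℝ) (t : ℕ)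
    (hD : (stateU T δ v adv cor u t).nd.1 = Nat.clog 2 T)
    (hL : v < nodeL (stateU T δ v adv cor u t).nd) (h0 : Nat.clog 2 T ≠ 0) :
    (stateU T δ v adv cor u (t + 1)).nd ≠ (stateU T δ v adv cor u t).nd ∨
    obsAtU T δ v adv cor u t ≠ decide (priceAtU T δ v adv cor u t ≤ v) ∨
    ∃ r, r + 1 = t ∧ obsAtU T δ v adv cor u r ≠ decide (priceAtU T δ v adv cor u r ≤ v) := by
  by_cases hstay : (stateU T δ v adv cor u (t + 1)).nd = (stateU T δ v adv cor u t).nd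
  swap
  · exact Or.inl hstay
  refine Or.inr ?_
  have hprice : ¬ priceAtU T δ v adv cor u t ≤ v := not_le.2 (lt_priceU_of_lt_nodeL hD hL)
  cases hobs : obsAtU T δ v adv cor u t with
  | true => left; simp [hprice]
  | false =>
    right
    rw [stateU_succ, hobs] at hstay
    have hph := stepU_stay_false hD h0 hstay
    cases t with
    | zero => simp [stateU, runU] at hph
    | succ r =>
      refine ⟨r, rfl, ?_⟩
      rw [stateU_succ] at hD hph hL
      obtain ⟨hnd, hb⟩ := stepU_checkR hD hph
      rw [← hnd] at hD hL
      have hprice' : ¬ priceAtU T δ v adv cor u r ≤ v :=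
        not_le.2 (lt_priceU_of_lt_nodeL hD hL)
      simp [hb, hprice']

/-- When the meta-algorithm is run with Commit procedure `CommitUnknown`
(parameter `δ ∈ (0,1)`, horizon `T`, valuation `v ∈ [0,1)`) and the feedback is corrupted
in at most `C` rounds, the total regret on the leaves lying strictly above the correct
leaf — the set `L⁺` of leaves whose left endpoint exceeds `v` — satisfies
`Σ_{ℓ ∈ L⁺} R(ℓ) ≤ 2·N_F + 2·C`, for every realization of the random seeds and every
adaptive adversary. -/
theorem commitUnknown_upper_leaves_regret
    (T C : ℕ) (δ : ℝ) (hδ : δ ∈ Set.Ioo (0 : ℝ) 1)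
    (v : ℝ) (hv : 0 ≤ v) (hv1 : v < 1)
    (adv : List (ℝ × Bool) → Bool) (cor : List (ℝ × Bool) → ℝ → Bool) (u : ℕ → ℝ)
    (hC : corruptionsU T δ v adv cor u ≤ C) :
    ∑ j ∈ (Finset.range (2 ^ Nat.clog 2 T)).filter
        (fun j => v < nodeL (Nat.clog 2 T, j)),
        RleafU T δ v adv cor u (Nat.clog 2 T, j)
      ≤ 2 * (NFU T δ v adv cor u : ℝ) + 2 * (C : ℝ) := by
  classical
  set J := (Finset.range (2 ^ Nat.clog 2 T)).filter (fun j => v < nodeL (Nat.clog 2 T, j)) with hJ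
  let Q : ℕ → Finset ℕ := fun j =>
    (Finset.range T).filter (fun t => (stateU T δ v adv cor u t).nd = (Nat.clog 2 T, j))
  let F : Finset ℕ := (Finset.range T).filter fun t =>
      (stateU T δ v adv cor u t).nd.1 = Nat.clog 2 T ∧
        (stateU T δ v adv cor u t).nd ≠ lstar v (Nat.clog 2 T) ∧
        (stateU T δ v adv cor u (t + 1)).nd ≠ (stateU T δ v adv cor u t).nd
  let K : Finset ℕ := (Finset.range T).filter fun t =>
      obsAtU T δ v adv cor u t ≠ decide (priceAtU T δ v adv cor u t ≤ v)
  have hreg : ∀ j ∈ J, RleafU T δ v adv cor u (Nat.clog 2 T, j) ≤ ((Q j).card : ℝ) := by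
    intro j hj
    have hLj : v < nodeL (Nat.clog 2 T, j) := (Finset.mem_filter.1 hj).2
    rw [Finset.card_eq_sum_ones]
    push_cast
    refine Finset.sum_le_sum fun t ht => ?_
    have hnd : (stateU T δ v adv cor u t).nd = (Nat.clog 2 T, j) := (Finset.mem_filter.1 ht).2
    have hprice : ¬ priceAtU T δ v adv cor u t ≤ v :=
      not_le.2 (lt_priceU_of_lt_nodeL (by rw [hnd]) (by rw [hnd]; exact hLj))
    rw [if_neg hprice]
    linarith
  have hcover : J.biUnion Q ⊆ F ∪ (K ∪ K.image (· + 1)) := by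
    intro t ht
    obtain ⟨j, hj, htj⟩ := Finset.mem_biUnion.1 ht
    obtain ⟨htT, hnd⟩ := Finset.mem_filter.1 htj
    obtain ⟨hjr, hLj⟩ := Finset.mem_filter.1 hj
    have hL : v < nodeL (stateU T δ v adv cor u t).nd := by rw [hnd]; exact hLj
    have hD : (stateU T δ v adv cor u t).nd.1 = Nat.clog 2 T := by rw [hnd]
    -- At depth `0` the root `[0, 1)` is the only leaf, and it is not above `v`.
    have h0 : Nat.clog 2 T ≠ 0 := by
      intro h0
      rw [h0] at hjr hLj
      have hj0 : j = 0 := by simpa using hjr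
      subst hj0
      simp [nodeL] at hLj
      linarith
    have hne : (stateU T δ v adv cor u t).nd ≠ lstar v (Nat.clog 2 T) := by
      intro h
      rw [h] at hL
      exact absurd (nodeL_lstar_le v hv _) (not_le.2 hL)
    rcases upper_round_cases T δ v adv cor u t hD hL h0 with h | h | ⟨r, rfl, h⟩
    · exact Finset.mem_union_left _ (Finset.mem_filter.2 ⟨htT, hD, hne, h⟩)
    · exact Finset.mem_union_right _ (Finset.mem_union_left _ (Finset.mem_filter.2 ⟨htT, h⟩))
    · have hrT : r ∈ Finset.range T := by
        rw [Finset.mem_range] at htT ⊢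
        omega
      exact Finset.mem_union_right _ (Finset.mem_union_right _
        (Finset.mem_image.2 ⟨r, Finset.mem_filter.2 ⟨hrT, h⟩, rfl⟩))
  have hdisj : (J : Set ℕ).PairwiseDisjoint Q := by
    intro i _ j _ hij
    refine Finset.disjoint_left.2 fun t hi hj => hij ?_
    have := (Finset.mem_filter.1 hi).2.symm.trans (Finset.mem_filter.1 hj).2
    exact congrArg Prod.snd this
  have hcard : ∑ j ∈ J, (Q j).card ≤ NFU T δ v adv cor u + 2 * C := by
    rw [← Finset.card_biUnion hdisj]
    have h1 := Finset.card_le_card hcover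
    have h2 := Finset.card_union_le F (K ∪ K.image (· + 1))
    have h3 := Finset.card_union_le K (K.image (· + 1))
    have h4 : (K.image (· + 1)).card ≤ K.card := Finset.card_image_le
    have h5 : K.card ≤ C := hC
    have h6 : F.card = NFU T δ v adv cor u := rfl
    omega
  have hcard' : (∑ j ∈ J, ((Q j).card : ℝ)) ≤ (NFU T δ v adv cor u : ℝ) + 2 * C := by
    exact_mod_cast hcard
  have hNF : (0 : ℝ) ≤ (NFU T δ v adv cor u : ℝ) := Nat.cast_nonneg _
  calc _ ≤ ∑ j ∈ J, ((Q j).card : ℝ) := Finset.sum_le_sum hreg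
    _ ≤ _ := by linarith

end RobustPricing
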